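/- Tightness of the upper bound: if f : [0,1] → ℝ is a continuous function such that for every pair of nonempty finite sets W1, W2 with cosine similarity S and resemblance R we have R ≤ f(S) ≤ S/(2 − S), then f(c) = c/(2 − c) for every c ∈ [0,1]; in other words, no continuous upper bound on R in terms of S alone can improve on S/(2 − S). -/

import Mathlib

/-!
Two sets of equal size `n` with `a` common elements have `S = a / n` and
`R = a / (2 n - a) = S / (2 - S)`, so for them the two bounds on `f S` coincide. Such pairs realise
every rational `S` in `[0, 1]`, and the rationals are dense there.
-/

open Set

section FinsetSimilarity

variable {α : Type*} [DecidableEq α] {s t : Finset α}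

/-- The cosine similarity `S` of the indicator vectors of two finite sets,
with the junk value `0` if one of them is empty. -/
noncomputable def cosineSimilarity (s t : Finset α) : ℝ :=
  ((s ∩ t).card : ℝ) / Real.sqrt ((s.card : ℝ) * (t.card : ℝ))

/-- The resemblance `R` (Jaccard index) of two finite sets,
with the junk value `0` if both are empty. -/
noncomputable def resemblance (s t : Finset α) : ℝ :=
  ((s ∩ t).card : ℝ) / ((s ∪ t).card : ℝ)

lemma cosineSimilarity_of_card_eq (h : s.card = t.card) :
    cosineSimilarity s t = ((s ∩ t).card : ℝ) / s.card := by
  rw [cosineSimilarity, ← h, Real.sqrt_mul_self s.card.cast_nonneg]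

lemma resemblance_of_card_eq (h : s.card = t.card) :
    resemblance s t = cosineSimilarity s t / (2 - cosineSimilarity s t) := by
  rw [cosineSimilarity_of_card_eq h, resemblance]
  obtain rfl | hs := s.eq_empty_or_nonempty
  · simp
  have hs_ne : (s.card : ℝ) ≠ 0 := by exact_mod_cast hs.card_ne_zero
  have h_union : ((s ∪ t).card : ℝ) = 2 * s.card - (s ∩ t).card := by
    rw [Finset.cast_card_union, ← h, two_mul]
  have h_denom : 2 - ((s ∩ t).card : ℝ) / s.card = (s ∪ t).card / s.card := by
    rw [h_union, sub_div, mul_div_cancel_right₀ _ hs_ne]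
  rw [h_denom, div_div_div_cancel_right₀ hs_ne]

end FinsetSimilarity

lemma continuousOn_div_two_sub {s : Set ℝ} (hs : 2 ∉ s) :
    ContinuousOn (fun c : ℝ => c / (2 - c)) s :=
  continuousOn_id.div (continuousOn_const.sub continuousOn_id) fun _ hc =>
    sub_ne_zero.mpr (ne_of_mem_of_not_mem hc hs).symm

section Infinite

variable {α : Type*} [DecidableEq α] [Infinite α]

variable (α) in
lemma exists_finset_card_inter_eq {a m n : ℕ} (ham : a ≤ m) (han : a ≤ n) :
    ∃ s t : Finset α, s.card = m ∧ t.card = n ∧ (s ∩ t).card = a := by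
  obtain ⟨v, hv⟩ := Infinite.exists_subset_card_eq α a
  obtain ⟨s, hvs, hs⟩ := Infinite.exists_superset_card_eq v m (hv.trans_le ham)
  obtain ⟨u, hsu, hu⟩ := Infinite.exists_superset_card_eq s (m + (n - a)) (by lia)
  refine ⟨s, v ∪ u \ s, hs, ?_, ?_⟩
  · have h_disj : Disjoint v (u \ s) := Finset.disjoint_sdiff.mono_left hvs
    rw [Finset.card_union_of_disjoint h_disj, Finset.card_sdiff_of_subset hsu]
    lia
  · rw [Finset.inter_union_distrib_left, Finset.inter_sdiff_self, Finset.union_empty,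
      Finset.inter_eq_right.mpr hvs, hv]

variable (α) in
lemma exists_cosineSimilarity_eq_ratCast {q : ℚ} (hq₀ : 0 ≤ q) (hq₁ : q ≤ 1) :
    ∃ s t : Finset α, s.Nonempty ∧ t.Nonempty ∧ s.card = t.card ∧ cosineSimilarity s t = q := by
  lift q to ℚ≥0 using hq₀
  have h_num_le : q.num ≤ q.den := by exact_mod_cast Rat.num_le_denom_iff.mpr hq₁
  obtain ⟨s, t, hs, ht, hst⟩ := exists_finset_card_inter_eq α h_num_le h_num_le
  have h_card : s.card = t.card := hs.trans ht.symm
  refine ⟨s, t, Finset.card_pos.mp (hs ▸ q.den_pos), Finset.card_pos.mp (ht ▸ q.den_pos),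
    h_card, ?_⟩
  rw [cosineSimilarity_of_card_eq h_card, hst, hs]
  exact_mod_cast (NNRat.cast_def q).symm

lemma le_on_Icc_of_le_cosineSimilarity {f g : ℝ → ℝ} (hf : ContinuousOn f (Icc 0 1))
    (hg : ContinuousOn g (Icc 0 1))
    (hfg : ∀ s t : Finset α, s.Nonempty → t.Nonempty → s.card = t.card →
      f (cosineSimilarity s t) ≤ g (cosineSimilarity s t)) :
    ∀ c ∈ Icc (0 : ℝ) 1, f c ≤ g c := by
  have h_closure : closure (Icc (0 : ℝ) 1 ∩ range ((↑) : ℚ → ℝ)) = Icc 0 1 := by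
    have h_nontrivial : (Icc (0 : ℝ) 1).Nontrivial :=
      nontrivial_of_lt (left_mem_Icc.mpr zero_le_one) (right_mem_Icc.mpr zero_le_one) zero_lt_one
    rw [closure_ordConnected_inter_rat ordConnected_Icc h_nontrivial, closure_Icc]
  have h_rat : ∀ x ∈ Icc (0 : ℝ) 1 ∩ range ((↑) : ℚ → ℝ), f x ≤ g x := by
    rintro _ ⟨⟨hq₀, hq₁⟩, q, rfl⟩
    obtain ⟨s, t, hs, ht, h_card, h_cos⟩ :=
      exists_cosineSimilarity_eq_ratCast α (q := q) (mod_cast hq₀) (mod_cast hq₁)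
    exact h_cos ▸ hfg s t hs ht h_card
  rw [← h_closure] at hf hg ⊢
  exact le_on_closure h_rat hf hg

lemma div_two_sub_le_of_resemblance_le {f : ℝ → ℝ} (hf : ContinuousOn f (Icc 0 1))
    (h_lower : ∀ s t : Finset α, s.Nonempty → t.Nonempty → s.card = t.card →
      resemblance s t ≤ f (cosineSimilarity s t)) :
    ∀ c ∈ Icc (0 : ℝ) 1, c / (2 - c) ≤ f c :=
  le_on_Icc_of_le_cosineSimilarity (α := α) (continuousOn_div_two_sub (by simp)) hf
    fun s t hs ht h_card => (resemblance_of_card_eq h_card).ge.trans (h_lower s t hs ht h_card)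

theorem upper_bound_tight_general {f : ℝ → ℝ} (hf : ContinuousOn f (Icc 0 1))
    (hbound : ∀ s t : Finset α, s.Nonempty → t.Nonempty → s.card = t.card →
      resemblance s t ≤ f (cosineSimilarity s t) ∧
        f (cosineSimilarity s t) ≤ cosineSimilarity s t / (2 - cosineSimilarity s t)) :
    ∀ c ∈ Icc (0 : ℝ) 1, f c = c / (2 - c) := by
  have h_ge := div_two_sub_le_of_resemblance_le hf
    fun s t hs ht h_card => (hbound s t hs ht h_card).1
  have h_le := le_on_Icc_of_le_cosineSimilarity hf (continuousOn_div_two_sub (by simp))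
    fun s t hs ht h_card => (hbound s t hs ht h_card).2
  exact fun c hc => le_antisymm (h_le c hc) (h_ge c hc)

end Infinite

/-- Tightness of the upper bound: any continuous `f` on `[0,1]` with
`R ≤ f(S) ≤ S/(2-S)` for all pairs of nonempty finite sets must equal `c/(2-c)` on `[0,1]`. -/
theorem upper_bound_tight (f : ℝ → ℝ) (hf : ContinuousOn f (Set.Icc 0 1))
    (hbound : ∀ W1 W2 : Finset ℕ, W1.Nonempty → W2.Nonempty →
      ((W1 ∩ W2).card : ℝ) / ((W1 ∪ W2).card : ℝ) ≤
          f (((W1 ∩ W2).card : ℝ) / Real.sqrt ((W1.card : ℝ) * (W2.card : ℝ))) ∧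
        f (((W1 ∩ W2).card : ℝ) / Real.sqrt ((W1.card : ℝ) * (W2.card : ℝ))) ≤
          (((W1 ∩ W2).card : ℝ) / Real.sqrt ((W1.card : ℝ) * (W2.card : ℝ))) /
            (2 - ((W1 ∩ W2).card : ℝ) / Real.sqrt ((W1.card : ℝ) * (W2.card : ℝ)))) :
    ∀ c ∈ Set.Icc (0 : ℝ) 1, f c = c / (2 - c) :=
  upper_bound_tight_general hf fun W1 W2 hW1 hW2 _ => hbound W1 W2 hW1 hW2
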